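/- Let ζ ∈ (-1/2, ∞). Then there exist constants c₁, c₂, c₃, c₄ > 0 (depending only on ζ) such that for all r, s, t > 0: c₁ · (min{1, r/√t})^ζ · (min{1, s/√t})^ζ · (rs)^{-ζ} · t^{-1/2} · exp(-(r-s)²/(c₂ t)) ≤ p_ζ^{(2)}(t,r,s) ≤ c₃ · (min{1, r/√t})^ζ · (min{1, s/√t})^ζ · (rs)^{-ζ} · t^{-1/2} · exp(-(r-s)²/(c₄ t)). -/

import Mathlib

open MeasureTheory Real Set Filter

/-- Modified Bessel function of the first kind of order `ν`. -/
noncomputable def besselI (ν x : ℝ) : ℝ :=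
  ∑' k : ℕ, (x / 2) ^ (2 * (k : ℝ) + ν) / ((Nat.factorial k : ℝ) * Real.Gamma ((k : ℝ) + ν + 1))

/-- The Bessel heat kernel `p_ζ^{(2)}(t,r,s)`. -/
noncomputable def besselHeat (ζ t r s : ℝ) : ℝ :=
  (r * s) ^ ((1 : ℝ) / 2 - ζ) / (2 * t) * Real.exp (-(r ^ 2 + s ^ 2) / (4 * t)) *
    besselI (ζ - 1 / 2) (r * s / (2 * t))

/-!
By the duplication formula, the `k`-th term of `besselI ν x` is a constant times
`x ^ ν * x ^ (2 * k) / (2 * k)! * (Γ(k + 1/2) / Γ(k + ν + 1))`, and the quotient of Gamma values is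
comparable to `(2 * k + 1) ^ (-(ν + 1/2))` as soon as `ν > -1`. So `besselI ν x` is comparable to
`x ^ ν * exp x` times a moment of one plus a Poisson variable of mean `x`, restricted to its even
values. Such a variable is concentrated at the scale `x + 1`, so its moment of order `p` is
comparable to `(x + 1) ^ p` for every real `p`, and `besselI ν x` is comparable to
`x ^ ν * (x + 1) ^ (-(ν + 1/2)) * exp x`.

For the heat kernel this gives the profile
`(2 * t + r * s) ^ (-ζ) * t ^ (-1/2) * exp (-(r - s) ^ 2 / (4 * t))`. On the other hand
`min 1 (r / √t) / r = 1 / max √t r`, and `max √t r * max √t s` is comparable to `2 * t + r * s` up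
to a factor `1 + |r - s| / √t`, any power of which is absorbed by a change of the Gaussian constant.
-/

open scoped Topology Nat

theorem rpow_le_pow_add_inv_pow {u p : ℝ} {n : ℕ} (hu : 0 < u) (hp : |p| ≤ n) :
    u ^ p ≤ u ^ n + u⁻¹ ^ n := by
  obtain ⟨hnp, hpn⟩ := abs_le.1 hp
  rcases le_total 1 u with h | h
  · calc u ^ p ≤ u ^ (n : ℝ) := rpow_le_rpow_of_exponent_le h hpn
      _ = u ^ n := rpow_natCast u n
      _ ≤ u ^ n + u⁻¹ ^ n := le_add_of_nonneg_right (by positivity)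
  · calc u ^ p ≤ u ^ (-n : ℝ) := rpow_le_rpow_of_exponent_ge hu h hnp
      _ = u⁻¹ ^ n := by rw [rpow_neg hu.le, rpow_natCast, inv_pow]
      _ ≤ u ^ n + u⁻¹ ^ n := le_add_of_nonneg_left (by positivity)

theorem rpow_le_rpow_abs_mul_rpow {x y K : ℝ} (hx : 0 < x) (hy : 0 < y) (hxy : x ≤ K * y)
    (hyx : y ≤ K * x) (q : ℝ) : x ^ q ≤ K ^ |q| * y ^ q := by
  have hK : 0 < K := pos_of_mul_pos_left (hx.trans_le hxy) hy.le
  rcases le_total 0 q with hq | hq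
  · rw [abs_of_nonneg hq, ← mul_rpow hK.le hy.le]
    exact rpow_le_rpow hx.le hxy hq
  · calc x ^ q = K ^ |q| * (K * x) ^ q := by
          rw [abs_of_nonpos hq, mul_rpow hK.le hx.le, ← mul_assoc, ← rpow_add hK, neg_add_cancel,
            rpow_zero, one_mul]
      _ ≤ K ^ |q| * y ^ q :=
          mul_le_mul_of_nonneg_left (rpow_le_rpow_of_nonpos hy hyx hq) (by positivity)

theorem one_add_rpow_le_exp_mul_exp {d q ε : ℝ} (hd : 0 ≤ d) (hq : 0 ≤ q) (hε : 0 < ε) :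
    (1 + d) ^ q ≤ exp (q ^ 2 / (4 * ε)) * exp (ε * d ^ 2) :=
  calc (1 + d) ^ q ≤ exp d ^ q :=
        rpow_le_rpow (by positivity) (by linarith [add_one_le_exp d]) hq
    _ = exp (d * q) := (exp_mul d q).symm
    _ ≤ exp (q ^ 2 / (4 * ε) + ε * d ^ 2) := by
        rw [exp_le_exp, ← sub_le_iff_le_add, le_div_iff₀ (by positivity)]
        linarith [sq_nonneg (2 * ε * d - q)]
    _ = exp (q ^ 2 / (4 * ε)) * exp (ε * d ^ 2) := exp_add _ _

theorem sum_pow_div_factorial_le_exp {x : ℝ} (hx : 0 ≤ x) (s : Finset ℕ) :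
    ∑ j ∈ s, x ^ j / j ! ≤ exp x := by
  rw [exp_eq_exp_ℝ]
  exact sum_le_hasSum s (fun j _ => by positivity) (NormedSpace.expSeries_div_hasSum_exp x)

theorem mul_exp_inv_add_one_le {x : ℝ} (hx : 0 ≤ x) : x * exp (x + 1)⁻¹ ≤ x + 2 := by
  have hinv : |(x + 1)⁻¹| ≤ 1 := by
    rw [abs_of_nonneg (by positivity)]
    exact inv_le_one_of_one_le₀ (by linarith)
  have hexp : exp (x + 1)⁻¹ - 1 ≤ 2 * (x + 1)⁻¹ := by
    simpa only [abs_of_nonneg (show 0 ≤ (x + 1)⁻¹ by positivity)] using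
      (le_abs_self _).trans (abs_exp_sub_one_le hinv)
  have hx1 : x * (x + 1)⁻¹ ≤ 1 := mul_inv_le_one_of_le₀ (by linarith) (by positivity)
  nlinarith [mul_le_mul_of_nonneg_left hexp hx]

theorem sum_pow_div_factorial_mul_div_pow_le {x : ℝ} (hx : 0 ≤ x) (n : ℕ) (s : Finset ℕ) :
    ∑ j ∈ s, x ^ j / j ! * ((j + 1) / (x + 1)) ^ n ≤ n ! * exp 3 * exp x := by
  -- `a ^ n ≤ n ! * exp a` turns the weight into a geometric factor, that is, changes the mean `x`.
  set h := (x + 1)⁻¹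
  have hh : h ≤ 1 := inv_le_one_of_one_le₀ (by linarith)
  have hterm (j : ℕ) : x ^ j / j ! * ((j + 1) / (x + 1)) ^ n ≤
      n ! * exp 1 * ((x * exp h) ^ j / j !) :=
    calc x ^ j / j ! * ((j + 1) / (x + 1)) ^ n ≤ x ^ j / j ! * (exp ((j + 1) / (x + 1)) * n !) := by
          gcongr
          exact (div_le_iff₀ (by positivity)).1 (pow_div_factorial_le_exp _ (by positivity) n)
      _ = n ! * exp h * ((x * exp h) ^ j / j !) := by
          rw [div_eq_mul_inv ((j : ℝ) + 1), add_one_mul, exp_add, exp_nat_mul, mul_pow]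
          ring
      _ ≤ n ! * exp 1 * ((x * exp h) ^ j / j !) := by gcongr
  calc ∑ j ∈ s, x ^ j / j ! * ((j + 1) / (x + 1)) ^ n
      ≤ n ! * exp 1 * ∑ j ∈ s, (x * exp h) ^ j / j ! := by
        rw [Finset.mul_sum]
        exact Finset.sum_le_sum fun j _ => hterm j
    _ ≤ n ! * exp 1 * exp (x * exp h) := by
        gcongr
        exact sum_pow_div_factorial_le_exp (by positivity) s
    _ ≤ n ! * exp 1 * exp (x + 2) := by
        gcongr
        exact mul_exp_inv_add_one_le hx
    _ = n ! * exp 3 * exp x := by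
        rw [mul_assoc, mul_assoc, ← exp_add, ← exp_add]
        ring_nf

theorem factorial_add_le_mul_pow (j n : ℕ) : (j + n)! ≤ j ! * ((n + 1) * (j + 1)) ^ n :=
  calc (j + n)! = j ! * (j + 1).ascFactorial n := (Nat.factorial_mul_ascFactorial j n).symm
    _ ≤ j ! * (j + n) ^ n := by gcongr; exact Nat.ascFactorial_le_pow_add j n
    _ ≤ j ! * ((n + 1) * (j + 1)) ^ n := by gcongr; nlinarith

theorem sum_pow_div_factorial_mul_inv_div_pow_le {x : ℝ} (hx : 0 ≤ x) (n : ℕ) (s : Finset ℕ) :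
    ∑ j ∈ s, x ^ j / j ! * ((j + 1) / (x + 1))⁻¹ ^ n ≤
      2 ^ (n - 1) * ((n + 1) ^ n + 1) * exp x := by
  have hterm (j : ℕ) : x ^ j / j ! * ((j + 1) / (x + 1))⁻¹ ^ n ≤
      2 ^ (n - 1) * ((n + 1) ^ n * (x ^ (j + n) / (j + n)!) + x ^ j / j !) := by
    have hfact : (j ! * (j + 1) ^ n : ℝ)⁻¹ ≤ (n + 1) ^ n / (j + n)! := by
      rw [inv_le_comm₀ (by positivity) (by positivity), inv_div, div_le_iff₀ (by positivity)]
      have := factorial_add_le_mul_pow j n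
      rw [mul_pow, mul_left_comm] at this
      exact_mod_cast this.trans_eq (mul_comm _ _)
    have hone : ((j : ℝ) + 1)⁻¹ ^ n ≤ 1 :=
      pow_le_one₀ (by positivity) (inv_le_one_of_one_le₀ (by linarith [j.cast_nonneg (α := ℝ)]))
    calc x ^ j / j ! * ((j + 1) / (x + 1))⁻¹ ^ n
        = x ^ j / j ! * ((j : ℝ) + 1)⁻¹ ^ n * (x + 1) ^ n := by
          rw [inv_div, div_pow, inv_pow]; ring
      _ ≤ x ^ j / j ! * ((j : ℝ) + 1)⁻¹ ^ n * (2 ^ (n - 1) * (x ^ n + 1)) := by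
          gcongr
          simpa only [one_pow] using add_pow_le hx zero_le_one n
      _ = 2 ^ (n - 1) * ((j ! * (j + 1) ^ n : ℝ)⁻¹ * x ^ (j + n) +
            x ^ j / j ! * ((j : ℝ) + 1)⁻¹ ^ n) := by
          rw [mul_inv, inv_pow]; ring
      _ ≤ 2 ^ (n - 1) * ((n + 1) ^ n / (j + n)! * x ^ (j + n) + x ^ j / j ! * 1) := by gcongr
      _ = 2 ^ (n - 1) * ((n + 1) ^ n * (x ^ (j + n) / (j + n)!) + x ^ j / j !) := by ring
  have hshift : ∑ j ∈ s, x ^ (j + n) / (j + n)! ≤ exp x := by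
    simpa only [Finset.sum_map, addRightEmbedding_apply] using
      sum_pow_div_factorial_le_exp hx (s.map (addRightEmbedding n))
  calc ∑ j ∈ s, x ^ j / j ! * ((j + 1) / (x + 1))⁻¹ ^ n
      ≤ 2 ^ (n - 1) * ((n + 1) ^ n * ∑ j ∈ s, x ^ (j + n) / (j + n)! + ∑ j ∈ s, x ^ j / j !) := by
        rw [Finset.mul_sum, ← Finset.sum_add_distrib, Finset.mul_sum]
        exact Finset.sum_le_sum fun j _ => hterm j
    _ ≤ 2 ^ (n - 1) * ((n + 1) ^ n * exp x + exp x) := by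
        gcongr
        exact sum_pow_div_factorial_le_exp hx s
    _ = 2 ^ (n - 1) * ((n + 1) ^ n + 1) * exp x := by ring

theorem exists_sum_pow_div_factorial_mul_div_rpow_le (p : ℝ) :
    ∃ C : ℝ, 0 < C ∧ ∀ x : ℝ, 0 ≤ x → ∀ s : Finset ℕ,
      ∑ j ∈ s, x ^ j / j ! * ((j + 1) / (x + 1)) ^ p ≤ C * exp x := by
  set n := ⌈|p|⌉₊
  refine ⟨n ! * exp 3 + 2 ^ (n - 1) * ((n + 1) ^ n + 1), by positivity, fun x hx s => ?_⟩
  calc ∑ j ∈ s, x ^ j / j ! * ((j + 1) / (x + 1)) ^ p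
      ≤ ∑ j ∈ s, x ^ j / j ! * (((j + 1) / (x + 1)) ^ n + ((j + 1) / (x + 1))⁻¹ ^ n) :=
        Finset.sum_le_sum fun j _ => mul_le_mul_of_nonneg_left
          (rpow_le_pow_add_inv_pow (by positivity) (Nat.le_ceil |p|)) (by positivity)
    _ = ∑ j ∈ s, x ^ j / j ! * ((j + 1) / (x + 1)) ^ n +
          ∑ j ∈ s, x ^ j / j ! * ((j + 1) / (x + 1))⁻¹ ^ n := by
        simp only [mul_add, Finset.sum_add_distrib]
    _ ≤ n ! * exp 3 * exp x + 2 ^ (n - 1) * ((n + 1) ^ n + 1) * exp x :=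
        add_le_add (sum_pow_div_factorial_mul_div_pow_le hx n s)
          (sum_pow_div_factorial_mul_inv_div_pow_le hx n s)
    _ = (n ! * exp 3 + 2 ^ (n - 1) * ((n + 1) ^ n + 1)) * exp x := by ring

/-- Up to the factor `exp x`, the `p`-th moment of a Poisson variable of mean `x`, restricted to its
even values `2 * k` and scaled by its mean; the power series of `besselI` is comparable to it. Both
the variable and the mean are shifted by one, to allow `p < 0` and `x = 0`. -/
noncomputable def evenPoissonMoment (p x : ℝ) : ℝ :=
  ∑' k : ℕ, x ^ (2 * k) / (2 * k)! * (((2 * k : ℕ) + 1) / (x + 1)) ^ p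

theorem exists_evenPoissonMoment_sum_le (p : ℝ) :
    ∃ C : ℝ, 0 < C ∧ ∀ x : ℝ, 0 ≤ x → ∀ s : Finset ℕ,
      ∑ k ∈ s, x ^ (2 * k) / (2 * k)! * (((2 * k : ℕ) + 1) / (x + 1)) ^ p ≤ C * exp x := by
  obtain ⟨C, hC, hle⟩ := exists_sum_pow_div_factorial_mul_div_rpow_le p
  refine ⟨C, hC, fun x hx s => ?_⟩
  simpa only [Finset.sum_map, Function.Embedding.coeFn_mk] using
    hle x hx (s.map ⟨fun k => 2 * k, mul_right_injective₀ two_ne_zero⟩)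

theorem summable_evenPoissonMoment (p : ℝ) {x : ℝ} (hx : 0 ≤ x) :
    Summable fun k : ℕ => x ^ (2 * k) / (2 * k)! * (((2 * k : ℕ) + 1) / (x + 1)) ^ p := by
  obtain ⟨C, -, hle⟩ := exists_evenPoissonMoment_sum_le p
  exact summable_of_sum_le (fun k => by positivity) (hle x hx)

theorem exists_evenPoissonMoment_le (p : ℝ) :
    ∃ C : ℝ, 0 < C ∧ ∀ x : ℝ, 0 ≤ x → evenPoissonMoment p x ≤ C * exp x := by
  obtain ⟨C, hC, hle⟩ := exists_evenPoissonMoment_sum_le p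
  exact ⟨C, hC, fun x hx => Real.tsum_le_of_sum_le (fun k => by positivity) (hle x hx)⟩

-- AM-GM: `2 ≤ b * u ^ p + b⁻¹ * u ^ (-p)`; hence a bound on the moment of order `-p` from above
-- gives one on the moment of order `p` from below.
theorem two_mul_cosh_le_evenPoissonMoment {x b : ℝ} (p : ℝ) (hx : 0 ≤ x) (hb : 0 < b) :
    2 * cosh x ≤ b * evenPoissonMoment p x + b⁻¹ * evenPoissonMoment (-p) x := by
  have hterm (k : ℕ) : 2 * (x ^ (2 * k) / (2 * k)!) ≤
      b * (x ^ (2 * k) / (2 * k)! * (((2 * k : ℕ) + 1) / (x + 1)) ^ p) +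
        b⁻¹ * (x ^ (2 * k) / (2 * k)! * (((2 * k : ℕ) + 1) / (x + 1)) ^ (-p)) := by
    set v := b * (((2 * k : ℕ) + 1) / (x + 1)) ^ p with hv
    have hvpos : 0 < v := by positivity
    have hvinv : b⁻¹ * (((2 * k : ℕ) + 1) / (x + 1)) ^ (-p) = v⁻¹ := by
      rw [rpow_neg (by positivity), ← mul_inv]
    have hamgm : 2 ≤ v + v⁻¹ := by
      have := sq_nonneg (v - 1)
      field_simp
      linarith
    rw [mul_left_comm, ← hv, mul_left_comm b⁻¹, hvinv, ← mul_add, mul_comm]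
    gcongr
  have hp := (summable_evenPoissonMoment p hx).hasSum.mul_left b
  have hnp := (summable_evenPoissonMoment (-p) hx).hasSum.mul_left b⁻¹
  exact hasSum_le hterm ((hasSum_cosh x).mul_left 2) (hp.add hnp)

theorem exists_le_evenPoissonMoment (p : ℝ) :
    ∃ c : ℝ, 0 < c ∧ ∀ x : ℝ, 0 ≤ x → c * exp x ≤ evenPoissonMoment p x := by
  obtain ⟨C, hC, hle⟩ := exists_evenPoissonMoment_le (-p)
  refine ⟨(4 * C)⁻¹, by positivity, fun x hx => ?_⟩
  have hcosh : exp x ≤ 2 * cosh x := by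
    rw [cosh_eq]
    linarith [exp_pos (-x)]
  have hupper : (2 * C)⁻¹ * evenPoissonMoment (-p) x ≤ exp x / 2 :=
    calc (2 * C)⁻¹ * evenPoissonMoment (-p) x ≤ (2 * C)⁻¹ * (C * exp x) := by
          gcongr
          exact hle x hx
      _ = exp x / 2 := by field_simp
  rw [inv_mul_le_iff₀ (by positivity)]
  linarith [two_mul_cosh_le_evenPoissonMoment p hx (show 0 < 2 * C by positivity)]

theorem prod_range_add_mul_Gamma {s : ℝ} (hs : 0 < s) (n : ℕ) :
    (∏ j ∈ Finset.range n, (s + j)) * Gamma s = Gamma (n + s) := by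
  induction n with
  | zero => simp
  | succ n ih =>
    rw [Finset.prod_range_succ, mul_right_comm, ih, mul_comm, add_comm s,
      ← Gamma_add_one (by positivity), Nat.cast_succ, add_right_comm]

theorem GammaSeq_eq_rpow_mul_div {s : ℝ} (hs : 0 < s) (n : ℕ) :
    GammaSeq s n = n ^ s * n ! * Gamma s / ((n + s) * Gamma (n + s)) := by
  have hΓ : Gamma s ≠ 0 := (Gamma_pos_of_pos hs).ne'
  rw [GammaSeq, Finset.prod_range_succ, ← prod_range_add_mul_Gamma hs, add_comm s]
  field_simp

theorem tendsto_rpow_mul_Gamma_add_div_Gamma_add {a b : ℝ} (ha : 0 < a) (hb : 0 < b) (c : ℝ) :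
    Tendsto (fun n : ℕ => (n + c) ^ (b - a) * (Gamma (n + a) / Gamma (n + b))) atTop (𝓝 1) := by
  have hΓa := Gamma_pos_of_pos ha
  have hΓb := Gamma_pos_of_pos hb
  have hseq := ((GammaSeq_tendsto_Gamma b).div (GammaSeq_tendsto_Gamma a) hΓa.ne').const_mul
    (Gamma a / Gamma b)
  have hfrac := (tendsto_natCast_div_add_atTop a).div (tendsto_natCast_div_add_atTop b) one_ne_zero
  have hshift := (tendsto_natCast_div_add_atTop c).rpow_const (p := a - b) (Or.inl one_ne_zero)
  have hlim := (hshift.mul hseq).mul hfrac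
  rw [one_rpow, one_mul, div_one, mul_one, div_mul_div_cancel₀ hΓb.ne', div_self hΓa.ne'] at hlim
  refine hlim.congr' ?_
  filter_upwards [eventually_gt_atTop 0, tendsto_natCast_atTop_atTop.eventually_gt_atTop (-c)]
    with n hn hnc
  have hn' : (0 : ℝ) < n := Nat.cast_pos.2 hn
  have hnc' : 0 < n + c := by linarith
  have : 0 < Gamma (n + a) := Gamma_pos_of_pos (by positivity)
  have : 0 < Gamma (n + b) := Gamma_pos_of_pos (by positivity)
  simp only [Pi.div_apply]
  rw [GammaSeq_eq_rpow_mul_div ha, GammaSeq_eq_rpow_mul_div hb, ← neg_sub b a,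
    rpow_neg (by positivity), div_rpow hn'.le hnc'.le, rpow_sub hn']
  field_simp

theorem exists_Gamma_add_le_rpow_mul_Gamma_add {a b c : ℝ} (ha : 0 < a) (hb : 0 < b)
    (hc : 0 < c) :
    ∃ C : ℝ, 0 < C ∧ ∀ k : ℕ, Gamma (k + a) ≤ C * (k + c) ^ (a - b) * Gamma (k + b) := by
  obtain ⟨C, hC⟩ := (tendsto_rpow_mul_Gamma_add_div_Gamma_add ha hb c).bddAbove_range
  have hle (k : ℕ) : (k + c) ^ (b - a) * (Gamma (k + a) / Gamma (k + b)) ≤ C :=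
    hC (mem_range_self k)
  have hΓ {y : ℝ} (hy : 0 < y) (k : ℕ) : 0 < Gamma (k + y) := Gamma_pos_of_pos (by positivity)
  have hCpos : 0 < C := by
    have := hΓ ha 0
    have := hΓ hb 0
    exact lt_of_lt_of_le (by positivity) (hle 0)
  refine ⟨C, hCpos, fun k => ?_⟩
  rw [← div_le_iff₀ (hΓ hb k), ← neg_sub b a, rpow_neg (by positivity), mul_comm C,
    ← inv_mul_le_iff₀ (by positivity), inv_inv]
  exact hle k

theorem exists_Gamma_add_div_Gamma_add_bounds {a b c : ℝ} (ha : 0 < a) (hb : 0 < b) (hc : 0 < c) :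
    ∃ m M : ℝ, 0 < m ∧ 0 < M ∧ ∀ k : ℕ,
      m * (k + c) ^ (a - b) ≤ Gamma (k + a) / Gamma (k + b) ∧
        Gamma (k + a) / Gamma (k + b) ≤ M * (k + c) ^ (a - b) := by
  obtain ⟨M, hM, hab⟩ := exists_Gamma_add_le_rpow_mul_Gamma_add ha hb hc
  obtain ⟨D, hD, hba⟩ := exists_Gamma_add_le_rpow_mul_Gamma_add hb ha hc
  refine ⟨D⁻¹, M, inv_pos.2 hD, hM, fun k => ?_⟩
  have hΓ : 0 < Gamma (k + b) := Gamma_pos_of_pos (by positivity)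
  refine ⟨?_, (div_le_iff₀ hΓ).2 (hab k)⟩
  rw [le_div_iff₀ hΓ, mul_assoc, inv_mul_le_iff₀ hD, ← neg_sub b a, rpow_neg (by positivity),
    inv_mul_le_iff₀ (by positivity)]
  exact (hba k).trans_eq (by ring)

theorem Gamma_add_half_mul_factorial (k : ℕ) :
    Gamma (k + 1 / 2) * k ! = (2 * k)! / 4 ^ k * √π := by
  have h := Gamma_mul_Gamma_add_half (k + 1 / 2)
  have hpow : (2 : ℝ) ^ (1 - ((2 * k : ℕ) + 1) : ℝ) = (4 ^ k)⁻¹ := by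
    rw [show (1 - ((2 * k : ℕ) + 1) : ℝ) = -(2 * k : ℕ) by ring, rpow_neg two_pos.le,
      rpow_natCast, pow_mul]
    norm_num
  rwa [add_assoc, add_halves, Gamma_nat_eq_factorial,
    show (2 * (k + 1 / 2) : ℝ) = (2 * k : ℕ) + 1 by push_cast; ring, Gamma_nat_eq_factorial, hpow,
    ← div_eq_mul_inv] at h

theorem besselI_term_eq (ν : ℝ) {x : ℝ} (hx : 0 < x) (k : ℕ) :
    (x / 2) ^ (2 * (k : ℝ) + ν) / (k ! * Gamma (k + ν + 1)) =
      (2 ^ ν * √π)⁻¹ * x ^ ν *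
        (x ^ (2 * k) / (2 * k)! * (Gamma (k + 1 / 2) / Gamma (k + (ν + 1)))) := by
  have hpow : (x / 2) ^ (2 * (k : ℝ) + ν) = x ^ (2 * k) / 4 ^ k * (x ^ ν / 2 ^ ν) := by
    rw [rpow_add (by positivity), div_rpow hx.le two_pos.le (z := ν),
      show (2 * (k : ℝ)) = (2 * k : ℕ) by push_cast; rfl, rpow_natCast, div_pow, pow_mul 2]
    norm_num
  rw [hpow, eq_div_of_mul_eq (by positivity) (Gamma_add_half_mul_factorial k), ← add_assoc]
  field_simp

theorem exists_besselI_term_bounds {ν : ℝ} (hν : -1 < ν) :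
    ∃ c C : ℝ, 0 < c ∧ 0 < C ∧ ∀ x : ℝ, 0 < x → ∀ k : ℕ,
      c * (x ^ ν * (x + 1) ^ (-(ν + 1 / 2))) *
          (x ^ (2 * k) / (2 * k)! * (((2 * k : ℕ) + 1) / (x + 1)) ^ (-(ν + 1 / 2))) ≤
        (x / 2) ^ (2 * (k : ℝ) + ν) / (k ! * Gamma (k + ν + 1)) ∧
      (x / 2) ^ (2 * (k : ℝ) + ν) / (k ! * Gamma (k + ν + 1)) ≤
        C * (x ^ ν * (x + 1) ^ (-(ν + 1 / 2))) *
          (x ^ (2 * k) / (2 * k)! * (((2 * k : ℕ) + 1) / (x + 1)) ^ (-(ν + 1 / 2))) := by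
  obtain ⟨c, C, hc, hC, hΓ⟩ :=
    exists_Gamma_add_div_Gamma_add_bounds one_half_pos (show 0 < ν + 1 by linarith) one_half_pos
  set B : ℝ := 2 ^ (ν + 1 / 2) * (2 ^ ν * √π)⁻¹ with hB
  refine ⟨B * c, B * C, by positivity, by positivity, fun x hx k => ?_⟩
  have hterm (A : ℝ) : B * A * (x ^ ν * (x + 1) ^ (-(ν + 1 / 2))) *
      (x ^ (2 * k) / (2 * k)! * (((2 * k : ℕ) + 1) / (x + 1)) ^ (-(ν + 1 / 2))) =
      (2 ^ ν * √π)⁻¹ * x ^ ν *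
        (x ^ (2 * k) / (2 * k)! * (A * (k + 1 / 2) ^ ((1 : ℝ) / 2 - (ν + 1)))) := by
    rw [hB, show (1 : ℝ) / 2 - (ν + 1) = -(ν + 1 / 2) by ring,
      show (((2 * k : ℕ) : ℝ) + 1) = 2 * (k + 1 / 2) by push_cast; ring,
      div_rpow (by positivity) (by positivity), mul_rpow two_pos.le (by positivity),
      rpow_neg two_pos.le]
    field_simp
  rw [besselI_term_eq ν hx, hterm, hterm]
  constructor
  · gcongr
    exact (hΓ k).1
  · gcongr
    exact (hΓ k).2

theorem exists_besselI_bounds {ν : ℝ} (hν : -1 < ν) :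
    ∃ c C : ℝ, 0 < c ∧ 0 < C ∧ ∀ x : ℝ, 0 < x →
      c * (x ^ ν * (x + 1) ^ (-(ν + 1 / 2)) * exp x) ≤ besselI ν x ∧
        besselI ν x ≤ C * (x ^ ν * (x + 1) ^ (-(ν + 1 / 2)) * exp x) := by
  obtain ⟨c, C, hc, hC, hterm⟩ := exists_besselI_term_bounds hν
  obtain ⟨d, hd, hlower⟩ := exists_le_evenPoissonMoment (-(ν + 1 / 2))
  obtain ⟨D, hD, hupper⟩ := exists_evenPoissonMoment_le (-(ν + 1 / 2))
  refine ⟨c * d, C * D, by positivity, by positivity, fun x hx => ?_⟩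
  set A := x ^ ν * (x + 1) ^ (-(ν + 1 / 2))
  have : 0 < A := by positivity
  have hsum := summable_evenPoissonMoment (-(ν + 1 / 2)) hx.le
  have hbessel : Summable fun k : ℕ =>
      (x / 2) ^ (2 * (k : ℝ) + ν) / (k ! * Gamma (k + ν + 1)) :=
    .of_nonneg_of_le (fun k => le_trans (by positivity) (hterm x hx k).1)
      (fun k => (hterm x hx k).2) (hsum.mul_left (C * A))
  constructor
  · calc c * d * (A * exp x) = c * A * (d * exp x) := by ring
      _ ≤ c * A * evenPoissonMoment (-(ν + 1 / 2)) x := by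
          gcongr
          exact hlower x hx.le
      _ ≤ besselI ν x :=
          hasSum_le (fun k => (hterm x hx k).1) (hsum.hasSum.mul_left (c * A)) hbessel.hasSum
  · calc besselI ν x ≤ C * A * evenPoissonMoment (-(ν + 1 / 2)) x :=
          hasSum_le (fun k => (hterm x hx k).2) hbessel.hasSum (hsum.hasSum.mul_left (C * A))
      _ ≤ C * A * (D * exp x) := by
          gcongr
          exact hupper x hx.le
      _ = C * D * (A * exp x) := by ring

theorem besselHeat_prefactor_mul_profile_eq (ζ : ℝ) {t r s : ℝ} (ht : 0 < t) (hr : 0 < r)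
    (hs : 0 < s) :
    (r * s) ^ ((1 : ℝ) / 2 - ζ) / (2 * t) * exp (-(r ^ 2 + s ^ 2) / (4 * t)) *
        ((r * s / (2 * t)) ^ (ζ - 1 / 2) * (r * s / (2 * t) + 1) ^ (-ζ) *
          exp (r * s / (2 * t))) =
      2 ^ (-(1 : ℝ) / 2) *
        ((2 * t + r * s) ^ (-ζ) * t ^ (-(1 : ℝ) / 2) * exp (-(r - s) ^ 2 / (4 * t))) := by
  have hrs : 0 < r * s := by positivity
  have hexp : exp (-(r - s) ^ 2 / (4 * t)) =
      exp (-(r ^ 2 + s ^ 2) / (4 * t)) * exp (r * s / (2 * t)) := by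
    rw [← exp_add]
    congr 1
    field_simp
    ring
  have hprod : (r * s) ^ ((1 : ℝ) / 2 - ζ) * (r * s / (2 * t)) ^ (ζ - 1 / 2) =
      (2 * t) ^ ((1 : ℝ) / 2 - ζ) := by
    rw [← neg_sub (1 / 2) ζ, rpow_neg (by positivity), ← div_eq_mul_inv,
      ← div_rpow (by positivity) (by positivity), div_div_cancel₀ hrs.ne']
  have hadd : (r * s / (2 * t) + 1) ^ (-ζ) = (2 * t + r * s) ^ (-ζ) * (2 * t) ^ ζ := by
    rw [div_add_one (by positivity), add_comm, div_rpow (by positivity) (by positivity),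
      rpow_neg (by positivity : (0 : ℝ) ≤ 2 * t), div_inv_eq_mul]
  have htwo : (2 * t) ^ ((1 : ℝ) / 2 - ζ) * (2 * t) ^ ζ / (2 * t) =
      2 ^ (-(1 : ℝ) / 2) * t ^ (-(1 : ℝ) / 2) := by
    rw [← rpow_add (by positivity), ← rpow_sub_one (by positivity), ← mul_rpow two_pos.le ht.le]
    ring_nf
  rw [hexp, hadd]
  linear_combination
    (2 * t + r * s) ^ (-ζ) * exp (-(r ^ 2 + s ^ 2) / (4 * t)) * exp (r * s / (2 * t)) *
      ((2 * t) ^ ζ / (2 * t) * hprod + htwo)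

theorem exists_besselHeat_bounds {ζ : ℝ} (hζ : -1 / 2 < ζ) :
    ∃ c C : ℝ, 0 < c ∧ 0 < C ∧ ∀ t r s : ℝ, 0 < t → 0 < r → 0 < s →
      c * ((2 * t + r * s) ^ (-ζ) * t ^ (-(1 : ℝ) / 2) * exp (-(r - s) ^ 2 / (4 * t))) ≤
          besselHeat ζ t r s ∧
        besselHeat ζ t r s ≤
          C * ((2 * t + r * s) ^ (-ζ) * t ^ (-(1 : ℝ) / 2) * exp (-(r - s) ^ 2 / (4 * t))) := by
  obtain ⟨c, C, hc, hC, hI⟩ := exists_besselI_bounds (show -1 < ζ - 1 / 2 by linarith)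
  refine ⟨c * 2 ^ (-(1 : ℝ) / 2), C * 2 ^ (-(1 : ℝ) / 2), by positivity, by positivity,
    fun t r s ht hr hs => ?_⟩
  obtain ⟨hlower, hupper⟩ := hI (r * s / (2 * t)) (by positivity)
  rw [sub_add_cancel] at hlower hupper
  rw [mul_assoc c, mul_assoc C, ← besselHeat_prefactor_mul_profile_eq ζ ht hr hs, besselHeat,
    mul_left_comm c, mul_left_comm C]
  constructor <;> gcongr

theorem min_one_div_rpow_mul_rpow_neg {τ r s : ℝ} (hτ : 0 < τ) (hr : 0 < r) (hs : 0 < s) (ζ : ℝ) :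
    min 1 (r / τ) ^ ζ * min 1 (s / τ) ^ ζ * (r * s) ^ (-ζ) = (max τ r * max τ s) ^ (-ζ) := by
  have hmin {y : ℝ} (hy : 0 < y) : min 1 (y / τ) = y / max τ y := by
    rcases le_total τ y with h | h
    · rw [min_eq_left ((one_le_div hτ).2 h), max_eq_right h, div_self hy.ne']
    · rw [min_eq_right ((div_le_one hτ).2 h), max_eq_left h]
  have : 0 < max τ r := lt_max_of_lt_left hτ
  have : 0 < max τ s := lt_max_of_lt_left hτ
  rw [hmin hr, hmin hs, ← mul_rpow (by positivity) (by positivity), div_mul_div_comm,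
    div_rpow (by positivity) (by positivity), rpow_neg (by positivity), rpow_neg (by positivity)]
  field_simp

theorem two_mul_sq_add_mul_le_three_mul_max_mul_max {τ r s : ℝ} (hτ : 0 ≤ τ) (hs : 0 ≤ s) :
    2 * τ ^ 2 + r * s ≤ 3 * (max τ r * max τ s) := by
  have hττ : τ * τ ≤ max τ r * max τ s := by gcongr <;> exact le_max_left _ _
  have hrs : r * s ≤ max τ r * max τ s := by gcongr <;> exact le_max_right _ _
  linarith

theorem max_mul_max_le_one_add_div_mul {τ r s : ℝ} (hτ : 0 < τ) (hr : 0 ≤ r) (hs : 0 ≤ s) :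
    max τ r * max τ s ≤ (1 + |r - s| / τ) * (2 * τ ^ 2 + r * s) := by
  wlog hrs : r ≤ s generalizing r s
  · rw [mul_comm (max τ r), abs_sub_comm, mul_comm r]
    exact this hs hr (le_of_not_ge hrs)
  have hd : 0 ≤ |r - s| / τ := by positivity
  have hprod : 0 ≤ r * s := by positivity
  have hdrs : 0 ≤ |r - s| / τ * (r * s) := by positivity
  rcases le_total τ r with h | h
  · rw [max_eq_right h, max_eq_right (h.trans hrs)]
    nlinarith [mul_nonneg hd (sq_nonneg τ)]
  · have hmax : max τ s ≤ τ * (1 + |r - s| / τ) := by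
      rw [mul_one_add, mul_div_cancel₀ _ hτ.ne', abs_sub_comm]
      exact max_le (by linarith [abs_nonneg (s - r)]) (by linarith [le_abs_self (s - r)])
    rw [max_eq_left h]
    nlinarith [mul_nonneg hd (sq_nonneg τ), mul_le_mul_of_nonneg_left hmax hτ.le]

theorem exists_max_mul_max_rpow_bounds (q : ℝ) {ε : ℝ} (hε : 0 < ε) :
    ∃ D : ℝ, 0 < D ∧ ∀ τ r s : ℝ, 0 < τ → 0 < r → 0 < s →
      (max τ r * max τ s) ^ q ≤
          D * exp (ε * ((r - s) ^ 2 / τ ^ 2)) * (2 * τ ^ 2 + r * s) ^ q ∧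
        (2 * τ ^ 2 + r * s) ^ q ≤
          D * exp (ε * ((r - s) ^ 2 / τ ^ 2)) * (max τ r * max τ s) ^ q := by
  refine ⟨3 ^ |q| * exp (|q| ^ 2 / (4 * ε)), by positivity, fun τ r s hτ hr hs => ?_⟩
  set X := max τ r * max τ s
  set Y := 2 * τ ^ 2 + r * s
  set d := |r - s| / τ
  have hX : 0 < X := mul_pos (lt_max_of_lt_left hτ) (lt_max_of_lt_left hτ)
  have hY : 0 < Y := by positivity
  have hd : 0 ≤ d := by positivity
  have hYX : Y ≤ 3 * (1 + d) * X :=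
    (two_mul_sq_add_mul_le_three_mul_max_mul_max hτ.le hs.le).trans (by nlinarith)
  have hXY : X ≤ 3 * (1 + d) * Y :=
    (max_mul_max_le_one_add_div_mul hτ hr.le hs.le).trans (by nlinarith)
  have hK : (3 * (1 + d)) ^ |q| ≤
      3 ^ |q| * exp (|q| ^ 2 / (4 * ε)) * exp (ε * ((r - s) ^ 2 / τ ^ 2)) :=
    calc (3 * (1 + d)) ^ |q| = 3 ^ |q| * (1 + d) ^ |q| :=
          mul_rpow three_pos.le (by positivity)
      _ ≤ 3 ^ |q| * (exp (|q| ^ 2 / (4 * ε)) * exp (ε * d ^ 2)) := by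
          gcongr
          exact one_add_rpow_le_exp_mul_exp hd (abs_nonneg q) hε
      _ = 3 ^ |q| * exp (|q| ^ 2 / (4 * ε)) * exp (ε * ((r - s) ^ 2 / τ ^ 2)) := by
          rw [div_pow, sq_abs (r - s), mul_assoc]
  exact ⟨(rpow_le_rpow_abs_mul_rpow hX hY hXY hYX q).trans (by gcongr),
    (rpow_le_rpow_abs_mul_rpow hY hX hYX hXY q).trans (by gcongr)⟩

theorem stmt1 (ζ : ℝ) (hζ : -1/2 < ζ) :
    ∃ c₁ c₂ c₃ c₄ : ℝ, 0 < c₁ ∧ 0 < c₂ ∧ 0 < c₃ ∧ 0 < c₄ ∧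
      ∀ r s t : ℝ, 0 < r → 0 < s → 0 < t →
        c₁ * (min 1 (r / Real.sqrt t)) ^ ζ * (min 1 (s / Real.sqrt t)) ^ ζ * (r * s) ^ (-ζ)
              * t ^ (-(1 : ℝ) / 2) * Real.exp (-(r - s) ^ 2 / (c₂ * t))
            ≤ besselHeat ζ t r s ∧
          besselHeat ζ t r s
            ≤ c₃ * (min 1 (r / Real.sqrt t)) ^ ζ * (min 1 (s / Real.sqrt t)) ^ ζ * (r * s) ^ (-ζ)
              * t ^ (-(1 : ℝ) / 2) * Real.exp (-(r - s) ^ 2 / (c₄ * t)) := by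
  obtain ⟨c, C, hc, hC, hheat⟩ := exists_besselHeat_bounds hζ
  obtain ⟨D, hD, hmax⟩ := exists_max_mul_max_rpow_bounds (-ζ) (show (0 : ℝ) < 1 / 8 by norm_num)
  refine ⟨c * D⁻¹, 8 / 3, C * D, 8, by positivity, by norm_num, by positivity, by norm_num,
    fun r s t hr hs ht => ?_⟩
  obtain ⟨hX, hY⟩ := hmax (√t) r s (sqrt_pos.2 ht) hr hs
  rw [sq_sqrt ht.le, ← min_one_div_rpow_mul_rpow_neg (sqrt_pos.2 ht) hr hs] at hX hY
  obtain ⟨hlower, hupper⟩ := hheat t r s ht hr hs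
  set G := exp (1 / 8 * ((r - s) ^ 2 / t))
  set E := exp (-(r - s) ^ 2 / (4 * t))
  have hE₂ : exp (-(r - s) ^ 2 / (8 / 3 * t)) = E * G⁻¹ := by
    rw [← exp_neg, ← exp_add]; congr 1; field_simp; ring
  have hE₄ : exp (-(r - s) ^ 2 / (8 * t)) = E * G := by
    rw [← exp_add]; congr 1; field_simp; ring
  rw [hE₂, hE₄]
  set M := min 1 (r / √t) ^ ζ * min 1 (s / √t) ^ ζ * (r * s) ^ (-ζ) with hM
  constructor
  · refine le_trans ?_ hlower
    calc _ = c * ((D * G)⁻¹ * M * t ^ (-(1 : ℝ) / 2) * E) := by rw [hM, mul_inv]; ring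
      _ ≤ _ := by gcongr; exact (inv_mul_le_iff₀ (by positivity)).2 hX
  · calc _ ≤ C * (D * G * M * t ^ (-(1 : ℝ) / 2) * E) := hupper.trans (by gcongr)
      _ = _ := by rw [hM]; ring
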